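/- Let c₁ and c₂ be nonzero real numbers with c₁ + c₂ = 1, let s ≥ 0, and let s₁ ∈ ℝ satisfy s₁ ≤ 2s − 1. Then there exists a constant C > 0 (depending on c₁, c₂, s, s₁) such that for all sequences a, b : ℤ → ℂ, Σ_{k ∈ ℤ : c₁k ∈ ℤ} ⟨k⟩^{2s₁} k² |a_{c₁k}|² |b_{c₂k}|² ≤ C · (Σ_{m ∈ ℤ} ⟨m⟩^{2s} |a_m|²) · (Σ_{n ∈ ℤ} ⟨n⟩^{2s} |b_n|²). (Note that if c₁k ∈ ℤ then also c₂k = k − c₁k ∈ ℤ, so the left-hand side is well defined; this is the H^{s₁} bound for the resonant bilinear term ρ(a,b)_k = k·a_{c₁k}·b_{c₂k}.) -/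

import Mathlib

/-- The Japanese bracket `⟨x⟩ = (1 + x²)^{1/2}`. -/
noncomputable def jb (x : ℝ) : ℝ := Real.sqrt (1 + x^2)

open scoped Classical

/-! On the resonant set `m = c₁ k` one has `k - m = c₂ k`, so `⟨k⟩`, `⟨m⟩` and `⟨k - m⟩` are all
comparable and `⟨k⟩^{2s₁} k² ≤ ⟨k⟩^{4s} ≲ ⟨m⟩^{2s} ⟨k - m⟩^{2s}`. The resonant sum is therefore
dominated by the sum over all `k, m` of `⟨m⟩^{2s} |a m|² ⟨k - m⟩^{2s} |b (k - m)|²`, which is the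
product of the squared norms after the change of variables `(k, m) ↦ (m, k - m)`. -/

theorem sq_jb (x : ℝ) : jb x ^ 2 = 1 + x ^ 2 :=
  Real.sq_sqrt (by positivity)

theorem one_le_jb (x : ℝ) : 1 ≤ jb x :=
  Real.one_le_sqrt.2 (le_add_of_nonneg_right (sq_nonneg x))

theorem jb_pos (x : ℝ) : 0 < jb x :=
  one_pos.trans_le (one_le_jb x)

theorem jb_mul_le (x y : ℝ) : jb (x * y) ≤ jb x * jb y := by
  refine (sq_le_sq₀ (jb_pos _).le (mul_pos (jb_pos x) (jb_pos y)).le).1 ?_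
  rw [mul_pow, sq_jb, sq_jb, sq_jb]
  nlinarith [sq_nonneg x, sq_nonneg y]

theorem exists_jb_rpow_le_mul_jb_mul_rpow {c : ℝ} (hc : c ≠ 0) (r : ℝ) :
    ∃ C > 0, ∀ x, jb x ^ r ≤ C * jb (c * x) ^ r := by
  rcases le_total 0 r with hr | hr
  · refine ⟨jb c⁻¹ ^ r, Real.rpow_pos_of_pos (jb_pos _) _, fun x => ?_⟩
    have hx : jb x ≤ jb c⁻¹ * jb (c * x) := by
      simpa only [inv_mul_cancel_left₀ hc] using jb_mul_le c⁻¹ (c * x)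
    rw [← Real.mul_rpow (jb_pos _).le (jb_pos _).le]
    exact Real.rpow_le_rpow (jb_pos x).le hx hr
  · refine ⟨jb c ^ (-r), Real.rpow_pos_of_pos (jb_pos _) _, fun x => ?_⟩
    have hx : (jb c * jb x) ^ r ≤ jb (c * x) ^ r :=
      Real.rpow_le_rpow_of_nonpos (jb_pos _) (jb_mul_le c x) hr
    rw [Real.mul_rpow (jb_pos _).le (jb_pos _).le] at hx
    rwa [Real.rpow_neg (jb_pos c).le, le_inv_mul_iff₀ (Real.rpow_pos_of_pos (jb_pos c) r)]

theorem jb_rpow_mul_sq_le {s s₁ : ℝ} (hs₁ : s₁ ≤ 2 * s - 1) (x : ℝ) :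
    jb x ^ (2 * s₁) * x ^ 2 ≤ jb x ^ (2 * s) * jb x ^ (2 * s) := by
  have hx : x ^ 2 ≤ jb x ^ (2 : ℝ) := by
    rw [Real.rpow_two, sq_jb]
    exact le_add_of_nonneg_left zero_le_one
  calc jb x ^ (2 * s₁) * x ^ 2
      ≤ jb x ^ (2 * s₁) * jb x ^ (2 : ℝ) :=
        mul_le_mul_of_nonneg_left hx (Real.rpow_nonneg (jb_pos x).le _)
    _ = jb x ^ (2 * s₁ + 2) := (Real.rpow_add (jb_pos x) _ _).symm
    _ ≤ jb x ^ (2 * s + 2 * s) :=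
        Real.rpow_le_rpow_of_exponent_le (one_le_jb x) (by linarith)
    _ = jb x ^ (2 * s) * jb x ^ (2 * s) := Real.rpow_add (jb_pos x) _ _

theorem exists_jb_rpow_mul_sq_le {c₁ c₂ s s₁ : ℝ} (hc₁ : c₁ ≠ 0) (hc₂ : c₂ ≠ 0)
    (hs₁ : s₁ ≤ 2 * s - 1) :
    ∃ C > 0, ∀ x, jb x ^ (2 * s₁) * x ^ 2 ≤
      C * (jb (c₁ * x) ^ (2 * s) * jb (c₂ * x) ^ (2 * s)) := by
  obtain ⟨C₁, hC₁, h₁⟩ := exists_jb_rpow_le_mul_jb_mul_rpow hc₁ (2 * s)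
  obtain ⟨C₂, hC₂, h₂⟩ := exists_jb_rpow_le_mul_jb_mul_rpow hc₂ (2 * s)
  refine ⟨C₁ * C₂, mul_pos hC₁ hC₂, fun x => ?_⟩
  have hx : 0 ≤ jb x ^ (2 * s) := Real.rpow_nonneg (jb_pos x).le _
  calc jb x ^ (2 * s₁) * x ^ 2
      ≤ jb x ^ (2 * s) * jb x ^ (2 * s) := jb_rpow_mul_sq_le hs₁ x
    _ ≤ (C₁ * jb (c₁ * x) ^ (2 * s)) * (C₂ * jb (c₂ * x) ^ (2 * s)) :=
        mul_le_mul (h₁ x) (h₂ x) hx (hx.trans (h₁ x))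
    _ = C₁ * C₂ * (jb (c₁ * x) ^ (2 * s) * jb (c₂ * x) ^ (2 * s)) :=
        mul_mul_mul_comm _ _ _ _

theorem hasSum_mul_sub_of_summable_norm {G R : Type*} [AddGroup G] [NormedRing R]
    [CompleteSpace R] {f g : G → R} (hf : Summable fun x => ‖f x‖)
    (hg : Summable fun x => ‖g x‖) :
    HasSum (fun p : G × G => f p.2 * g (p.1 - p.2)) ((∑' x, f x) * ∑' x, g x) := by
  let shear : G × G ≃ G × G :=
    (Equiv.prodComm G G).trans ((Equiv.refl G).prodShear Equiv.subRight)
  rw [tsum_mul_tsum_of_summable_norm hf hg]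
  exact shear.hasSum_iff.2 (summable_mul_of_summable_norm hf hg).hasSum

theorem summable_tsum_and_tsum_tsum_le_of_hasSum {α β : Type*} {f g : α × β → ℝ} {t : ℝ}
    (hf : ∀ p, 0 ≤ f p) (hfg : ∀ p, f p ≤ g p) (hg : HasSum g t) :
    (Summable fun x => ∑' y, f (x, y)) ∧ ∑' x, ∑' y, f (x, y) ≤ t := by
  have hsum : Summable f := hg.summable.of_nonneg_of_le hf hfg
  refine ⟨hsum.prod, ?_⟩
  rw [← hsum.tsum_prod]
  exact hasSum_le hfg hsum.hasSum hg

theorem rho_resonant_estimate_general {E F : Type*} [Norm E] [Norm F]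
    {c₁ c₂ s s₁ : ℝ} (hc₁ : c₁ ≠ 0) (hc₂ : c₂ ≠ 0) (hcc : c₁ + c₂ = 1)
    (hs₁ : s₁ ≤ 2 * s - 1) :
    ∃ C > 0, ∀ (a : ℤ → E) (b : ℤ → F),
      Summable (fun m : ℤ => jb (m : ℝ) ^ (2 * s) * ‖a m‖^2) →
      Summable (fun n : ℤ => jb (n : ℝ) ^ (2 * s) * ‖b n‖^2) →
      Summable (fun k : ℤ => ∑' m : ℤ,
        if (m : ℝ) = c₁ * (k : ℝ) then
          jb (k : ℝ) ^ (2 * s₁) * (k : ℝ)^2 * ‖a m‖^2 * ‖b (k - m)‖^2 else 0) ∧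
      (∑' k : ℤ, ∑' m : ℤ,
        if (m : ℝ) = c₁ * (k : ℝ) then
          jb (k : ℝ) ^ (2 * s₁) * (k : ℝ)^2 * ‖a m‖^2 * ‖b (k - m)‖^2 else 0)
        ≤ C * (∑' m : ℤ, jb (m : ℝ) ^ (2 * s) * ‖a m‖^2)
            * (∑' n : ℤ, jb (n : ℝ) ^ (2 * s) * ‖b n‖^2) := by
  obtain ⟨C, hC, hweight⟩ := exists_jb_rpow_mul_sq_le hc₁ hc₂ hs₁
  refine ⟨C, hC, fun a b ha hb => ?_⟩
  have hjb (x r : ℝ) : 0 ≤ jb x ^ r := Real.rpow_nonneg (jb_pos x).le r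
  have hresonant {k m : ℤ} (hm : (m : ℝ) = c₁ * k) : jb k ^ (2 * s₁) * (k : ℝ) ^ 2 ≤
      C * (jb m ^ (2 * s) * jb (k - m : ℤ) ^ (2 * s)) := by
    have hn : ((k - m : ℤ) : ℝ) = c₂ * k := by
      rw [Int.cast_sub, hm, eq_sub_of_add_eq' hcc, one_sub_mul]
    rw [hm, hn]
    exact hweight k
  have hconv := (hasSum_mul_sub_of_summable_norm ha.norm hb.norm).mul_left C
  rw [← mul_assoc] at hconv
  refine summable_tsum_and_tsum_tsum_le_of_hasSum (f := fun p : ℤ × ℤ =>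
    if (p.2 : ℝ) = c₁ * (p.1 : ℝ) then
      jb (p.1 : ℝ) ^ (2 * s₁) * (p.1 : ℝ)^2 * ‖a p.2‖^2 * ‖b (p.1 - p.2)‖^2 else 0)
    (fun ⟨k, m⟩ => ?_) (fun ⟨k, m⟩ => ?_) hconv
  · have hk := hjb k (2 * s₁)
    dsimp only
    positivity
  · dsimp only
    split_ifs with hm
    · calc jb k ^ (2 * s₁) * (k : ℝ) ^ 2 * ‖a m‖ ^ 2 * ‖b (k - m)‖ ^ 2
          = jb k ^ (2 * s₁) * (k : ℝ) ^ 2 * (‖a m‖ ^ 2 * ‖b (k - m)‖ ^ 2) := mul_assoc _ _ _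
        _ ≤ C * (jb m ^ (2 * s) * jb (k - m : ℤ) ^ (2 * s)) *
              (‖a m‖ ^ 2 * ‖b (k - m)‖ ^ 2) :=
            mul_le_mul_of_nonneg_right (hresonant hm) (by positivity)
        _ = C * (jb m ^ (2 * s) * ‖a m‖ ^ 2 *
              (jb (k - m : ℤ) ^ (2 * s) * ‖b (k - m)‖ ^ 2)) := by ring
    · have hm₀ := hjb m (2 * s)
      have hn₀ := hjb (k - m : ℤ) (2 * s)
      positivity

/-- Resonant bilinear estimate: if `c₁, c₂` are nonzero reals with `c₁ + c₂ = 1`, `s ≥ 0` and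
`s₁ ≤ 2s − 1`, then `Σ_{k : c₁k ∈ ℤ} ⟨k⟩^{2s₁} k² |a_{c₁k}|² |b_{c₂k}|²
  ≤ C (Σ_m ⟨m⟩^{2s}|a_m|²)(Σ_n ⟨n⟩^{2s}|b_n|²)`.
The sum over `{k : c₁k ∈ ℤ}` is encoded as a double sum over `k, m ∈ ℤ` with the
indicator of `m = c₁k` (for each `k` at most one `m` qualifies, and then `c₂k = k − m`). -/
theorem rho_resonant_estimate (c₁ c₂ : ℝ) (hc₁ : c₁ ≠ 0) (hc₂ : c₂ ≠ 0) (hcc : c₁ + c₂ = 1)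
    (s s₁ : ℝ) (hs : 0 ≤ s) (hs₁ : s₁ ≤ 2 * s - 1) :
    ∃ C > 0, ∀ a b : ℤ → ℂ,
      Summable (fun m : ℤ => jb (m : ℝ) ^ (2 * s) * ‖a m‖^2) →
      Summable (fun n : ℤ => jb (n : ℝ) ^ (2 * s) * ‖b n‖^2) →
      Summable (fun k : ℤ => ∑' m : ℤ,
        if (m : ℝ) = c₁ * (k : ℝ) then
          jb (k : ℝ) ^ (2 * s₁) * (k : ℝ)^2 * ‖a m‖^2 * ‖b (k - m)‖^2 else 0) ∧
      (∑' k : ℤ, ∑' m : ℤ,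
        if (m : ℝ) = c₁ * (k : ℝ) then
          jb (k : ℝ) ^ (2 * s₁) * (k : ℝ)^2 * ‖a m‖^2 * ‖b (k - m)‖^2 else 0)
        ≤ C * (∑' m : ℤ, jb (m : ℝ) ^ (2 * s) * ‖a m‖^2)
            * (∑' n : ℤ, jb (n : ℝ) ^ (2 * s) * ‖b n‖^2) :=
  rho_resonant_estimate_general hc₁ hc₂ hcc hs₁
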